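/- arXiv:2304.06525 — 7 statements merged into one kernel-verified Lean document; each statement's English description precedes it below -/
import Mathlib

section
/- Let E be a field, E' a finite field extension of E, and E'' a field extension of E such that the number of E-algebra homomorphisms from E' to E'' equals the degree [E' : E]. Let A be a commutative E''-algebra. Then the map E' ⊗_E A → ∏_{η ∈ Hom_{E-alg}(E', E'')} A, determined on elementary tensors by a ⊗ b ↦ (η(a)·b)_η, is a ring isomorphism (where η(a)·b uses the E''-algebra structure of A). -/
open TensorProduct

/-- Let `E` be a field, `E'` a finite extension of `E`, and `E''` an extension
of `E` with `|Hom_{E-alg}(E', E'')| = [E' : E]`.  Let `A` be a commutative `E''`-algebra.  Then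
the map `E' ⊗_E A → ∏_{η : E' →ₐ[E] E''} A` determined on elementary tensors by
`a ⊗ b ↦ (η(a)·b)_η` is a ring isomorphism. -/
theorem stmt3 (E E' E'' : Type*) [Field E] [Field E'] [Field E'']
    [Algebra E E'] [Algebra E E''] [FiniteDimensional E E']
    (A : Type*) [CommRing A] [Algebra E A] [Algebra E'' A] [IsScalarTower E E'' A]
    (hcard : Nat.card (E' →ₐ[E] E'') = Module.finrank E E') :
    ∃ Φ : (E' ⊗[E] A) ≃+* ((E' →ₐ[E] E'') → A),
      ∀ (a : E') (b : A) (η : E' →ₐ[E] E''),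
        Φ (a ⊗ₜ[E] b) η = algebraMap E'' A (η a) * b := by
  classical
  have hfin : Finite (E' →ₐ[E] E'') :=
    Nat.finite_of_card_ne_zero (by rw [hcard]; exact Module.finrank_pos.ne')
  have : Fintype (E' →ₐ[E] E'') := Fintype.ofFinite _
  let b : Module.Basis (E' →ₐ[E] E'') E E' :=
    (Module.finBasis E E').reindex
      (Fintype.equivOfCardEq (by rw [Fintype.card_fin, ← hcard, Nat.card_eq_fintype_card]))
  let M : Matrix (E' →ₐ[E] E'') (E' →ₐ[E] E'') E'' := Matrix.of fun η i => η (b i)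
  have hdet : M.det ≠ 0 := by
    intro h0
    obtain ⟨v, hv, hvM⟩ := Matrix.exists_vecMul_eq_zero_iff.mpr h0
    apply hv
    have hli := linearIndependent_algHom_toLinearMap E E' E''
    rw [Fintype.linearIndependent_iff] at hli
    funext η
    refine hli v ?_ η
    refine b.ext fun i => ?_
    have := congrFun hvM i
    simpa [Matrix.vecMul, dotProduct, M] using this
  have hu : IsUnit M.det := hdet.isUnit
  have hNM : M⁻¹ * M = 1 := Matrix.nonsing_inv_mul M hu
  have hMN : M * M⁻¹ = 1 := Matrix.mul_nonsing_inv M hu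
  let f : (E' ⊗[E] A) →ₐ[E] ((E' →ₐ[E] E'') → A) :=
    Algebra.TensorProduct.lift
      (Pi.algHom E _ fun η => (IsScalarTower.toAlgHom E E'' A).comp η)
      (Pi.algHom E _ fun _ => AlgHom.id E A) (fun _ _ => Commute.all _ _)
  have hf : ∀ (a : E') (x : A) (η : E' →ₐ[E] E''),
      f (a ⊗ₜ[E] x) η = algebraMap E'' A (η a) * x := by
    intro a x η
    simp [f]
  let P : Matrix (E' →ₐ[E] E'') (E' →ₐ[E] E'') A := M.map (algebraMap E'' A)
  let Q : Matrix (E' →ₐ[E] E'') (E' →ₐ[E] E'') A := M⁻¹.map (algebraMap E'' A)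
  have hQP : Q * P = 1 := by
    simp only [P, Q, ← Matrix.map_mul, hNM]
    exact Matrix.map_one _ (map_zero _) (map_one _)
  have hPQ : P * Q = 1 := by
    simp only [P, Q, ← Matrix.map_mul, hMN]
    exact Matrix.map_one _ (map_zero _) (map_one _)
  have hfs : ∀ x : (E' →ₐ[E] E'') → A, f (∑ i, b i ⊗ₜ[E] x i) = P.mulVec x := by
    intro x
    funext η
    simp [Matrix.mulVec, dotProduct, P, M, hf]
  have hrep : ∀ t : E' ⊗[E] A, ∃ x : (E' →ₐ[E] E'') → A, t = ∑ i, b i ⊗ₜ[E] x i := by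
    intro t
    induction t with
    | zero => exact ⟨0, by simp⟩
    | add s t hs ht =>
      obtain ⟨x, rfl⟩ := hs
      obtain ⟨y, rfl⟩ := ht
      exact ⟨x + y, by simp [TensorProduct.tmul_add, Finset.sum_add_distrib]⟩
    | tmul a x =>
      refine ⟨fun i => b.repr a i • x, ?_⟩
      conv_lhs => rw [← b.sum_repr a]
      rw [TensorProduct.sum_tmul]
      exact Finset.sum_congr rfl fun i _ => TensorProduct.smul_tmul _ _ _
  have hbij : Function.Bijective f := by
    constructor
    · rw [injective_iff_map_eq_zero]
      intro t ht
      obtain ⟨x, rfl⟩ := hrep t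
      rw [hfs] at ht
      have hx : x = 0 := by
        rw [← Matrix.one_mulVec x, ← hQP, ← Matrix.mulVec_mulVec, ht, Matrix.mulVec_zero]
      simp [hx]
    · intro y
      exact ⟨_, by rw [hfs (Q.mulVec y), Matrix.mulVec_mulVec, hPQ, Matrix.one_mulVec]⟩
  exact ⟨RingEquiv.ofBijective f hbij, hf⟩
end

section
/- Let E be a field, E' a finite field extension of E, and E'' a field extension of E such that the number of E-algebra homomorphisms from E' to E'' equals the degree [E' : E], and let A be a commutative E''-algebra. Let M be a module over E' ⊗_E A. For each η ∈ Hom_{E-alg}(E', E''), regard A as an (E' ⊗_E A)-algebra via a ⊗ b ↦ η(a)·b. Then: (i) the canonical map M → ∏_{η} (M ⊗_{E' ⊗_E A} A) is bijective; (ii) writing e_η for the idempotent of E' ⊗_E A corresponding to the η-th factor under the ring isomorphism E' ⊗_E A ≅ ∏_η A, one has M = ⊕_η e_η·M, and for each η the composite e_η·M ↪ M ↠ M ⊗_{E' ⊗_E A, η} A of the inclusion with the base-change projection is an isomorphism. -/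
open TensorProduct

section

variable (E E' E'' : Type) [Field E] [Field E'] [Field E'']
  [Algebra E E'] [Algebra E E''] [FiniteDimensional E E']
  (A : Type) [CommRing A] [Algebra E A] [Algebra E'' A] [IsScalarTower E E'' A]

/-- The ring homomorphism `E' ⊗_E A → A` attached to an embedding `η : E' →ₐ[E] E''`,
sending `a ⊗ b` to `η(a)·b` (using the `E''`-algebra structure of `A`). -/
noncomputable def etaHom (η : E' →ₐ[E] E'') : (E' ⊗[E] A) →+* A :=
  (Algebra.TensorProduct.productMap
    ((IsScalarTower.toAlgHom E E'' A).comp η) (AlgHom.id E A)).toRingHom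

/-- `A` regarded as an `(E' ⊗_E A)`-algebra (in particular module) via `η`. -/
def EtaA (_η : E' →ₐ[E] E'') : Type := A

instance (η : E' →ₐ[E] E'') : CommRing (EtaA E E' E'' A η) :=
  inferInstanceAs (CommRing A)

instance (η : E' →ₐ[E] E'') : Module A (EtaA E E' E'' A η) :=
  inferInstanceAs (Module A A)

noncomputable instance (η : E' →ₐ[E] E'') : Module (E' ⊗[E] A) (EtaA E E' E'' A η) :=
  Module.compHom (EtaA E E' E'' A η) (etaHom E E' E'' A η)

end


/-- Abstract decomposition along orthogonal idempotents. -/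
theorem abstract_decomp {R ι M : Type} [CommRing R] [Fintype ι] [DecidableEq ι]
    [AddCommGroup M] [Module R M] (e : ι → R)
    (hmul : ∀ i j, e i * e j = if i = j then e i else 0) (hsum : ∑ i, e i = 1)
    (N : ι → Type) [∀ i, AddCommGroup (N i)] [∀ i, Module R (N i)]
    (p : ∀ i, M →ₗ[R] N i) (hs : ∀ i, Function.Surjective (p i))
    (hk : ∀ i m, p i m = 0 ↔ e i • m = 0) :
    Function.Bijective (fun m : M => fun i => p i m) ∧
    DirectSum.IsInternal (fun i => LinearMap.range (LinearMap.lsmul R M (e i))) ∧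
    ∀ i, Function.Bijective
      (fun x : LinearMap.range (LinearMap.lsmul R M (e i)) => p i (x : M)) := by
  have hself : ∀ i m, p i (e i • m) = p i m := by
    intro i m
    rw [← sub_eq_zero, ← map_sub, hk, smul_sub, smul_smul, hmul, if_pos rfl, sub_self]
  have hne : ∀ i j m, i ≠ j → p i (e j • m) = 0 := by
    intro i j m h
    rw [hk, smul_smul, hmul, if_neg h, zero_smul]
  have hdec : ∀ m : M, m = ∑ i, e i • m := by
    intro m
    rw [← Finset.sum_smul, hsum, one_smul]
  refine ⟨⟨?_, ?_⟩, ?_, ?_⟩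
  · intro m m' h
    rw [← sub_eq_zero, hdec (m - m')]
    refine Finset.sum_eq_zero fun i _ => ?_
    rw [← hk, map_sub, sub_eq_zero]
    exact congrFun h i
  · intro n
    choose m hm using fun i => hs i (n i)
    refine ⟨∑ j, e j • m j, ?_⟩
    funext i
    change p i (∑ j, e j • m j) = n i
    rw [map_sum, Finset.sum_eq_single i, hself, hm]
    · intro j _ hj
      exact hne i j _ (Ne.symm hj)
    · simp
  · rw [DirectSum.isInternal_submodule_iff_iSupIndep_and_iSup_eq_top]
    constructor
    · intro i
      have hle : (⨆ (j) (_ : j ≠ i), LinearMap.range (LinearMap.lsmul R M (e j))) ≤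
          LinearMap.ker (LinearMap.lsmul R M (e i)) := by
        refine iSup₂_le fun j hj => ?_
        rintro _ ⟨m, rfl⟩
        simp +contextual [smul_smul, hmul, hj]
      refine Disjoint.mono_right hle ?_
      rw [Submodule.disjoint_def]
      rintro _ ⟨m, rfl⟩ h
      simpa [smul_smul, hmul] using h
    · rw [eq_top_iff]
      intro m _
      rw [hdec m]
      exact Submodule.sum_mem _ fun i _ =>
        Submodule.mem_iSup_of_mem i ⟨m, rfl⟩
  · intro i
    constructor
    · rintro ⟨_, m, rfl⟩ ⟨_, m', rfl⟩ h
      apply Subtype.ext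
      change p i (e i • m) = p i (e i • m') at h
      change e i • m = e i • m'
      rw [hself, hself, ← sub_eq_zero, ← map_sub, hk, smul_sub, sub_eq_zero] at h
      exact h
    · intro n
      obtain ⟨m, rfl⟩ := hs i n
      exact ⟨⟨_, m, rfl⟩, hself i m⟩

theorem etaHom_tmul (E E' E'' : Type) [Field E] [Field E'] [Field E'']
    [Algebra E E'] [Algebra E E''] [FiniteDimensional E E']
    (A : Type) [CommRing A] [Algebra E A] [Algebra E'' A] [IsScalarTower E E'' A]
    (η : E' →ₐ[E] E'') (a : E') (b : A) :
    etaHom E E' E'' A η (a ⊗ₜ b) = η a • b := by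
  simp [etaHom, Algebra.smul_def]

theorem eta_injective (E E' E'' : Type) [Field E] [Field E'] [Field E'']
    [Algebra E E'] [Algebra E E''] [FiniteDimensional E E']
    (A : Type) [CommRing A] [Algebra E A] [Algebra E'' A] [IsScalarTower E E'' A]
    (hcard : Nat.card (E' →ₐ[E] E'') = Module.finrank E E')
    (x : E' ⊗[E] A) (hx : ∀ η : E' →ₐ[E] E'', etaHom E E' E'' A η x = 0) : x = 0 := by
  classical
  have hspan : Submodule.span E''
      (Set.range (AlgHom.toLinearMap : (E' →ₐ[E] E'') → E' →ₗ[E] E'')) = ⊤ := by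
    have : Nonempty (E' →ₐ[E] E'') := by
      have : 0 < Nat.card (E' →ₐ[E] E'') := hcard ▸ Module.finrank_pos
      exact (Nat.card_pos_iff.mp this).1
    apply (linearIndependent_toLinearMap E E' E'').span_eq_top_of_card_eq_finrank
    rw [← Nat.card_eq_fintype_card, hcard, Module.finrank_linearMap_self]
  let b := Module.finBasis E E'
  obtain ⟨c, rfl⟩ := TensorProduct.eq_repr_basis_left b x
  have key : ∀ f : E' →ₗ[E] E'', (c.sum fun i a => f (b i) • a) = 0 := by
    intro f
    have hf : f ∈ Submodule.span E''
      (Set.range (AlgHom.toLinearMap : (E' →ₐ[E] E'') → E' →ₗ[E] E'')) := hspan ▸ trivial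
    induction hf using Submodule.span_induction with
    | mem f hf =>
      obtain ⟨η, rfl⟩ := hf
      have := hx η
      simpa [Finsupp.sum, map_sum, etaHom_tmul] using this
    | zero => simp [Finsupp.sum]
    | add f g _ _ hf hg => 
      simp only [Finsupp.sum] at hf hg ⊢
      simp [add_smul, Finset.sum_add_distrib, hf, hg]
    | smul r f _ hf =>
      simp only [Finsupp.sum] at hf ⊢
      simp [mul_smul, ← Finset.smul_sum, hf]
  have hc : c = 0 := by
    ext i
    have := key ((Algebra.linearMap E E'').comp (b.coord i))
    simpa [Finsupp.sum, Finsupp.single_apply, ite_smul, apply_ite] using this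
  simp [hc]

/-- In the setting of Statement 3, let `M` be a module over `E' ⊗_E A`.  Then:
(i) the canonical map `M → ∏_η (M ⊗_{E' ⊗_E A} A)` (with `A` regarded as an `(E' ⊗_E A)`-algebra
via `η`) is bijective; (ii) writing `e_η` for the idempotent of `E' ⊗_E A` corresponding to the
`η`-th factor under the ring isomorphism `E' ⊗_E A ≅ ∏_η A`, one has `M = ⊕_η e_η·M`, and for
each `η` the composite `e_η·M ↪ M ↠ M ⊗_{E' ⊗_E A, η} A` is an isomorphism. -/
theorem stmt4 (E E' E'' : Type) [Field E] [Field E'] [Field E'']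
    [Algebra E E'] [Algebra E E''] [FiniteDimensional E E']
    [DecidableEq (E' →ₐ[E] E'')]
    (A : Type) [CommRing A] [Algebra E A] [Algebra E'' A] [IsScalarTower E E'' A]
    (hcard : Nat.card (E' →ₐ[E] E'') = Module.finrank E E')
    (M : Type) [AddCommGroup M] [Module (E' ⊗[E] A) M]
    (e : (E' →ₐ[E] E'') → (E' ⊗[E] A))
    (he : ∀ η η' : E' →ₐ[E] E'',
      etaHom E E' E'' A η' (e η) = if η' = η then 1 else 0) :
    Function.Bijective (fun m : M => fun η : E' →ₐ[E] E'' =>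
      (m ⊗ₜ[E' ⊗[E] A] (1 : EtaA E E' E'' A η) :
        M ⊗[E' ⊗[E] A] (EtaA E E' E'' A η))) ∧
    DirectSum.IsInternal (fun η : E' →ₐ[E] E'' =>
      LinearMap.range (LinearMap.lsmul (E' ⊗[E] A) M (e η))) ∧
    ∀ η : E' →ₐ[E] E'',
      Function.Bijective
        (fun x : LinearMap.range (LinearMap.lsmul (E' ⊗[E] A) M (e η)) =>
          ((x : M) ⊗ₜ[E' ⊗[E] A] (1 : EtaA E E' E'' A η) :
            M ⊗[E' ⊗[E] A] (EtaA E E' E'' A η))) := by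
  classical
  have : Fintype (E' →ₐ[E] E'') := Fintype.ofFinite _
  have hinj : ∀ x y : E' ⊗[E] A,
      (∀ η : E' →ₐ[E] E'', etaHom E E' E'' A η x = etaHom E E' E'' A η y) → x = y := by
    intro x y h
    rw [← sub_eq_zero]
    refine eta_injective E E' E'' A hcard _ fun η => ?_
    rw [map_sub, h, sub_self]
  have hmul : ∀ i j, e i * e j = if i = j then e i else 0 := by
    intro i j
    apply hinj
    intro η
    rw [map_mul, he, he]
    by_cases h : i = j
    · subst h
      rw [if_pos rfl, he]
      split_ifs <;> simp
    · rw [if_neg h, map_zero]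
      by_cases h1 : η = i
      · subst h1
        simp [h]
      · simp [h1]
  have hsum : ∑ i, e i = 1 := by
    apply hinj
    intro η
    simp [map_sum, he]
  have hred : ∀ η r, e η * ((1 : E') ⊗ₜ[E] etaHom E E' E'' A η r) = e η * r := by
    intro η r
    apply hinj
    intro η'
    rw [map_mul, map_mul, he, etaHom_tmul]
    split_ifs with h
    · subst h
      simp
    · simp
  have hred2 : ∀ (η : E' →ₐ[E] E'') (r : E' ⊗[E] A) (a : A),
      e η * ((1 : E') ⊗ₜ[E] (etaHom E E' E'' A η r * a)) = r * (e η * ((1 : E') ⊗ₜ[E] a)) := by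
    intro η r a
    rw [← mul_assoc, mul_comm r, ← hred η r, mul_assoc, Algebra.TensorProduct.tmul_mul_tmul, one_mul]
  have hsm : ∀ (η : E' →ₐ[E] E'') (r : E' ⊗[E] A) (a : EtaA E E' E'' A η),
      r • a = (show A from etaHom E E' E'' A η r) * (show A from a) := fun _ _ _ => rfl
  let p : ∀ η : E' →ₐ[E] E'', M →ₗ[E' ⊗[E] A] M ⊗[E' ⊗[E] A] (EtaA E E' E'' A η) :=
    fun η => (TensorProduct.mk (E' ⊗[E] A) M (EtaA E E' E'' A η)).flip 1
  refine abstract_decomp e hmul hsum (fun η => M ⊗[E' ⊗[E] A] (EtaA E E' E'' A η)) p ?_ ?_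
  · intro η t
    induction t using TensorProduct.induction_on with
    | zero => exact ⟨0, map_zero _⟩
    | add x y hx hy =>
      obtain ⟨x, rfl⟩ := hx
      obtain ⟨y, rfl⟩ := hy
      exact ⟨x + y, map_add _ _ _⟩
    | tmul m a =>
      refine ⟨((1 : E') ⊗ₜ[E] (show A from a)) • m, ?_⟩
      change (((1 : E') ⊗ₜ[E] (show A from a)) • m) ⊗ₜ[E' ⊗[E] A] (1 : EtaA E E' E'' A η) = _
      rw [TensorProduct.smul_tmul]
      congr 1
      rw [hsm, etaHom_tmul, map_one, one_smul]
      exact mul_one (show A from a)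
  · intro η m
    constructor
    · intro h
      let g : M →ₗ[E' ⊗[E] A] EtaA E E' E'' A η →ₗ[E' ⊗[E] A] M :=
        LinearMap.mk₂ (E' ⊗[E] A)
          (fun m a => (e η * ((1 : E') ⊗ₜ[E] (show A from a))) • m)
          (fun m m' a => smul_add _ _ _)
          (fun r m a => smul_comm _ _ _)
          (fun m a a' => by
            rw [← add_smul, ← mul_add, ← TensorProduct.tmul_add]
            rfl)
          (fun r m a => by
            rw [smul_smul]
            exact congrArg (fun t => t • m) (hred2 η r a))
      have h2 := congrArg (TensorProduct.lift g) h
      rw [map_zero] at h2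
      have h3 : (e η * ((1 : E') ⊗ₜ[E] (1 : A))) • m = 0 := h2
      rwa [← Algebra.TensorProduct.one_def, mul_one] at h3
    · intro h
      have h1 : p η m = p η (e η • m) := by
        change m ⊗ₜ[E' ⊗[E] A] (1 : EtaA E E' E'' A η) = (e η • m) ⊗ₜ[E' ⊗[E] A] 1
        rw [TensorProduct.smul_tmul]
        congr 1
        rw [hsm, he, if_pos rfl]
        exact (one_mul (1 : A)).symm
      rw [h1, h, map_zero]
end

section
/- Let 𝔄 be an abelian category. Let A be an object with a chain of subobjects 0 = F₀A ≤ F₁A ≤ ⋯ ≤ F_sA = A and set A' = F_{s₀}A for some 0 ≤ s₀ ≤ s; let B be an object with a chain 0 = F₀B ≤ ⋯ ≤ F_tB = B and set B' = F_{t₀}B for some 0 ≤ t₀ ≤ t. Assume Hom(F_iA/F_{i−1}A, F_jB/F_{j−1}B) = 0 for all 1 ≤ i ≤ s and 1 ≤ j ≤ t such that i ≤ s₀ or j ≥ t₀. Then the natural map Hom(A/A', B') → Hom(A, B), sending φ to the composite of the projection A ↠ A/A', then φ, then the inclusion B' ↪ B, is bijective. -/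
open CategoryTheory CategoryTheory.Limits

theorem aux_left {𝒜 : Type*} [Category 𝒜] [Abelian 𝒜]
    (A Y : 𝒜) (s : ℕ)
    (FA : Fin (s + 1) → Subobject A) (hFA : Monotone FA)
    (hFA0 : FA 0 = ⊥) (s₀ : Fin (s + 1))
    (hv : ∀ (i : Fin s), i.succ ≤ s₀ →
      ∀ f : cokernel (Subobject.ofLE (FA i.castSucc) (FA i.succ)
              (hFA (Fin.castSucc_le_succ i))) ⟶ Y, f = 0)
    (g : A ⟶ Y) : (FA s₀).arrow ≫ g = 0 := by
  have key : ∀ k : Fin (s + 1), k ≤ s₀ → (FA k).arrow ≫ g = 0 := by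
    intro k
    induction k using Fin.induction with
    | zero =>
      intro _
      rw [hFA0, Subobject.bot_arrow, zero_comp]
    | succ i ih =>
      intro hi
      have h0 := ih (le_trans (Fin.castSucc_le_succ i) hi)
      have h1 : Subobject.ofLE (FA i.castSucc) (FA i.succ)
          (hFA (Fin.castSucc_le_succ i)) ≫ ((FA i.succ).arrow ≫ g) = 0 := by
        rw [← Category.assoc, Subobject.ofLE_arrow, h0]
      rw [← cokernel.π_desc _ _ h1, hv i hi (cokernel.desc _ _ h1), comp_zero]
  exact key s₀ le_rfl

theorem aux_right {𝒜 : Type*} [Category 𝒜] [Abelian 𝒜]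
    (X B : 𝒜) (t : ℕ)
    (FB : Fin (t + 1) → Subobject B) (hFB : Monotone FB)
    (hFBtop : FB (Fin.last t) = ⊤) (t₀ : Fin (t + 1))
    (hv : ∀ (j : Fin t), t₀ ≤ j.castSucc →
      ∀ f : X ⟶ cokernel (Subobject.ofLE (FB j.castSucc) (FB j.succ)
              (hFB (Fin.castSucc_le_succ j))), f = 0)
    (g : X ⟶ B) : ∃ g' : X ⟶ (FB t₀ : 𝒜), g' ≫ (FB t₀).arrow = g := by
  have key : ∀ k : Fin (t + 1), t₀ ≤ k → ∃ g' : X ⟶ (FB k : 𝒜), g' ≫ (FB k).arrow = g := by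
    intro k
    induction k using Fin.reverseInduction with
    | last =>
      intro _
      rw [hFBtop]
      exact ⟨g ≫ inv (⊤ : Subobject B).arrow, by simp⟩
    | cast j ih =>
      intro hj
      obtain ⟨g', hg'⟩ := ih (le_trans hj (Fin.castSucc_le_succ j))
      have h1 := hv j hj (g' ≫ cokernel.π _)
      refine ⟨Abelian.monoLift _ g' h1, ?_⟩
      rw [← hg', ← Subobject.ofLE_arrow (hFB (Fin.castSucc_le_succ j)), ← Category.assoc,
        Abelian.monoLift_comp]
  exact key t₀ le_rfl

/-- **factor-through condition.**  Given objects `A`, `B` of an abelian category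
with finite chains of subobjects `0 = F₀A ≤ ⋯ ≤ F_sA = A` and `0 = F₀B ≤ ⋯ ≤ F_tB = B`,
set `A' := F_{s₀}A`, `B' := F_{t₀}B`.  If `Hom(F_iA/F_{i−1}A, F_jB/F_{j−1}B) = 0` whenever
`i ≤ s₀` or `j ≥ t₀`, then the natural map `Hom(A/A', B') → Hom(A, B)` is bijective. -/
theorem stmt7 {𝒜 : Type*} [Category 𝒜] [Abelian 𝒜]
    (A B : 𝒜) (s t : ℕ)
    (FA : Fin (s + 1) → Subobject A) (hFA : Monotone FA)
    (hFA0 : FA 0 = ⊥) (hFAtop : FA (Fin.last s) = ⊤) (s₀ : Fin (s + 1))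
    (FB : Fin (t + 1) → Subobject B) (hFB : Monotone FB)
    (hFB0 : FB 0 = ⊥) (hFBtop : FB (Fin.last t) = ⊤) (t₀ : Fin (t + 1))
    (hvanish : ∀ (i : Fin s) (j : Fin t), (i.succ ≤ s₀ ∨ t₀ ≤ j.succ) →
      ∀ f : cokernel (Subobject.ofLE (FA i.castSucc) (FA i.succ)
              (hFA (Fin.castSucc_le_succ i))) ⟶
            cokernel (Subobject.ofLE (FB j.castSucc) (FB j.succ)
              (hFB (Fin.castSucc_le_succ j))), f = 0) :
    Function.Bijective (fun φ : (cokernel (FA s₀).arrow ⟶ ((FB t₀ : 𝒜))) =>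
      cokernel.π (FA s₀).arrow ≫ φ ≫ (FB t₀).arrow) := by
  constructor
  · intro φ ψ h
    simp only [← Category.assoc] at h
    rw [cancel_mono] at h
    exact (cancel_epi _).1 h
  · intro f
    have h0 : (FA s₀).arrow ≫ f = 0 := by
      refine aux_left A B s FA hFA hFA0 s₀ (fun i hi g => ?_) f
      obtain ⟨g', rfl⟩ := aux_right _ B t FB hFB hFBtop 0
        (fun j _ => hvanish i j (Or.inl hi)) g
      have hz : (FB 0).arrow = 0 := by rw [hFB0, Subobject.bot_arrow]
      rw [hz, comp_zero]
    obtain ⟨f', rfl⟩ := aux_right A B t FB hFB hFBtop t₀ (fun j hj g => by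
      have h := aux_left A _ s FA hFA hFA0 (Fin.last s)
        (fun i _ => hvanish i j (Or.inr (le_trans hj (Fin.castSucc_le_succ j)))) g
      rw [hFAtop] at h
      exact (cancel_epi (⊤ : Subobject A).arrow).1 (by rw [h, comp_zero])) f
    have h1 : (FA s₀).arrow ≫ f' = 0 := by
      rw [← cancel_mono (FB t₀).arrow, Category.assoc, h0, zero_comp]
    refine ⟨cokernel.desc _ f' h1, ?_⟩
    simp
end

section
/- Let 𝔄 be an abelian category and D an object with a chain of subobjects 0 = F₀D ≤ F₁D ≤ ⋯ ≤ F_lD = D; write gr_j = F_jD/F_{j−1}D for 1 ≤ j ≤ l. Fix 1 ≤ i ≤ l and assume Hom(gr_j, gr_i) = 0 for all 1 ≤ j < i. Then precomposition with the projection F_iD ↠ gr_i induces a bijection Hom(gr_i, gr_i) ≅ Hom(F_iD, gr_i). In particular, if 𝔄 is C-linear over a field C and Hom(gr_i, gr_i) is one-dimensional over C, then Hom(F_iD, gr_i) is one-dimensional over C. -/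
open CategoryTheory CategoryTheory.Limits

/-- The `j`-th graded piece `F_{j+1}D / F_jD` of a chain of subobjects. -/
noncomputable def stmtGr {𝒜 : Type*} [Category 𝒜] [Abelian 𝒜] {D : 𝒜} {l : ℕ}
    (F : Fin (l + 1) → Subobject D) (hmono : Monotone F) (j : Fin l) : 𝒜 :=
  cokernel (Subobject.ofLE (F j.castSucc) (F j.succ) (hmono (Fin.castSucc_le_succ j)))

/-- Let `𝒜` be a (`C`-linear) abelian category and `D` an object with a chain of
subobjects `0 = F₀D ≤ ⋯ ≤ F_lD = D`; write `gr_j = F_jD/F_{j−1}D`.  Fix `i` and assume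
`Hom(gr_j, gr_i) = 0` for all `j < i`.  Then precomposition with the projection
`F_iD ↠ gr_i` induces a bijection `Hom(gr_i, gr_i) ≅ Hom(F_iD, gr_i)`.  In particular, if
`Hom(gr_i, gr_i)` is one-dimensional over `C`, then so is `Hom(F_iD, gr_i)`. -/
theorem stmt8 (C : Type*) [Field C] {𝒜 : Type*} [Category 𝒜] [Abelian 𝒜] [Linear C 𝒜]
    (D : 𝒜) (l : ℕ) (F : Fin (l + 1) → Subobject D) (hmono : Monotone F)
    (h0 : F 0 = ⊥) (htop : F (Fin.last l) = ⊤) (i : Fin l)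
    (hvanish : ∀ j : Fin l, j < i → ∀ f : stmtGr F hmono j ⟶ stmtGr F hmono i, f = 0) :
    Function.Bijective (fun φ : (stmtGr F hmono i ⟶ stmtGr F hmono i) =>
      cokernel.π (Subobject.ofLE (F i.castSucc) (F i.succ)
        (hmono (Fin.castSucc_le_succ i))) ≫ φ) ∧
    (Module.finrank C (stmtGr F hmono i ⟶ stmtGr F hmono i) = 1 →
      Module.finrank C (((F i.succ : 𝒜)) ⟶ stmtGr F hmono i) = 1) := by
  have key : ∀ k : Fin (l + 1), k ≤ i.castSucc →
      ∀ f : (F k : 𝒜) ⟶ stmtGr F hmono i, f = 0 := by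
    intro k
    induction k using Fin.induction with
    | zero =>
      intro _ f
      have hz : IsZero ((F 0 : Subobject D) : 𝒜) := by
        rw [h0]
        exact (isZero_zero 𝒜).of_iso Subobject.botCoeIsoZero
      exact hz.eq_of_src f 0
    | succ j ih =>
      intro hj f
      have hji : j < i := by
        rw [Fin.le_def] at hj
        rw [Fin.lt_def]
        simp only [Fin.val_succ, Fin.val_castSucc] at hj
        omega
      have hle : j.castSucc ≤ i.castSucc := by
        rw [Fin.castSucc_le_castSucc_iff]
        exact hji.le
      have hw := ih hle
        (Subobject.ofLE (F j.castSucc) (F j.succ) (hmono (Fin.castSucc_le_succ j)) ≫ f)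
      have hd := hvanish j hji (cokernel.desc _ f hw)
      rw [← cokernel.π_desc _ f hw]
      exact (congrArg (fun g => cokernel.π _ ≫ g) hd).trans comp_zero
  have hbij : Function.Bijective (fun φ : (stmtGr F hmono i ⟶ stmtGr F hmono i) =>
      cokernel.π (Subobject.ofLE (F i.castSucc) (F i.succ)
        (hmono (Fin.castSucc_le_succ i))) ≫ φ) := by
    constructor
    · intro a b hab
      exact (cancel_epi (cokernel.π (Subobject.ofLE (F i.castSucc) (F i.succ)
        (hmono (Fin.castSucc_le_succ i))))).1 hab
    · intro f
      exact ⟨cokernel.desc _ f (key _ le_rfl _), cokernel.π_desc _ _ _⟩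
  refine ⟨hbij, fun h => ?_⟩
  rw [← h]
  exact (LinearEquiv.ofBijective (Linear.leftComp C (stmtGr F hmono i)
    (cokernel.π (Subobject.ofLE (F i.castSucc) (F i.succ)
        (hmono (Fin.castSucc_le_succ i))))) hbij).finrank_eq.symm
end

section
/- Let R be a commutative ℚ-algebra, c ∈ R a unit, M an R-module, and N : M → M a nilpotent R-linear endomorphism. Let M[Y] := R[Y] ⊗_R M (polynomials in Y with coefficients in M), and let D : M[Y] → M[Y] be the R-linear map determined by D(Yᵏ ⊗ m) = Yᵏ ⊗ N(m) + c·k·Y^{k−1} ⊗ m for all k ≥ 0 and m ∈ M. Then the R-linear map ε : M → M[Y], ε(m) = Σ_{k≥0} ((−1/c)ᵏ/k!)·Yᵏ ⊗ Nᵏ(m) (a finite sum since N is nilpotent), is injective with image exactly ker D; in particular ker D ≅ M as R-modules, so if M is free of rank d over R then ker D is free of rank d. Moreover, the R[Y]-linear endomorphism of M[Y] determined by 1 ⊗ m ↦ ε(m) is bijective. -/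
/-- The map `ε : M → M[Y]`, `m ↦ Σ_k ((−1/c)ᵏ/k!) · Yᵏ ⊗ Nᵏ(m)` (a finite sum, truncated at the
nilpotency index `n` of `N`). -/
noncomputable def stmtEps (R : Type*) [CommRing R] [Algebra ℚ R] {M : Type*}
    [AddCommGroup M] [Module R M] (c : Rˣ) (N : M →ₗ[R] M) (n : ℕ) (m : M) :
    PolynomialModule R M :=
  ∑ k ∈ Finset.range n,
    PolynomialModule.single R k
      ((algebraMap ℚ R ((-1) ^ k / (Nat.factorial k)) * ((c⁻¹ : Rˣ) : R) ^ k) • ((N ^ k) m))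

open PolynomialModule in
theorem eps_coeff_aux {R : Type*} [CommRing R] [Algebra ℚ R] {M : Type*}
    [AddCommGroup M] [Module R M] (c : Rˣ) (N : M →ₗ[R] M) (n : ℕ) (hn : N ^ n = 0) (m : M)
    (k : ℕ) : (stmtEps R c N n m).coeff k =
      (algebraMap ℚ R ((-1) ^ k / (Nat.factorial k)) * ((c⁻¹ : Rˣ) : R) ^ k) • ((N ^ k) m) := by
  unfold stmtEps
  simp only [coeff_sum, coeff_single, Finsupp.finsetSum_apply, Finsupp.single_apply]
  rw [Finset.sum_ite_eq' (Finset.range n) k]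
  split_ifs with h
  · rfl
  · have : N ^ k = 0 := pow_eq_zero_of_le (by simpa using h) hn
    simp [this]

theorem scal_aux {R : Type*} [CommRing R] [Algebra ℚ R] (c : Rˣ) (k : ℕ) :
    ((c : R) * ((k + 1 : ℕ) : R)) *
      (algebraMap ℚ R ((-1) ^ (k + 1) / (Nat.factorial (k + 1))) * ((c⁻¹ : Rˣ) : R) ^ (k + 1))
    = - (algebraMap ℚ R ((-1) ^ k / (Nat.factorial k)) * ((c⁻¹ : Rˣ) : R) ^ k) := by
  have h1 : ((k + 1 : ℕ) : R) * algebraMap ℚ R ((-1) ^ (k + 1) / (Nat.factorial (k + 1)))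
      = - algebraMap ℚ R ((-1) ^ k / (Nat.factorial k)) := by
    rw [← map_natCast (algebraMap ℚ R), ← map_mul, ← map_neg]
    congr 1
    rw [Nat.factorial_succ]
    have : (Nat.factorial k : ℚ) ≠ 0 := by positivity
    push_cast
    field_simp
    ring
  have h2 : (c : R) * ((c⁻¹ : Rˣ) : R) = 1 := c.mul_inv
  calc _ = (((k + 1 : ℕ) : R) * algebraMap ℚ R ((-1) ^ (k + 1) / (Nat.factorial (k + 1)))) *
        ((c : R) * ((c⁻¹ : Rˣ) : R)) * ((c⁻¹ : Rˣ) : R) ^ k := by ring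
    _ = _ := by rw [h1, h2]; ring

open PolynomialModule in
theorem D_coeff_aux {R : Type*} [CommRing R] {M : Type*}
    [AddCommGroup M] [Module R M] (c : Rˣ) (N : M →ₗ[R] M)
    (D : PolynomialModule R M →ₗ[R] PolynomialModule R M)
    (hD : ∀ (k : ℕ) (m : M),
      D (PolynomialModule.single R k m)
        = PolynomialModule.single R k (N m)
          + ((c : R) * (k : R)) • PolynomialModule.single R (k - 1) m)
    (x : PolynomialModule R M) (k : ℕ) :
    (D x).coeff k = N (x.coeff k) + ((c : R) * ((k + 1 : ℕ) : R)) • x.coeff (k + 1) := by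
  induction x using PolynomialModule.induction_linear with
  | zero => simp
  | add p q hp hq =>
    simp only [map_add, coeff_add, Finsupp.add_apply, hp, hq, smul_add]
    abel
  | single i m =>
    rw [hD, ← single_smul]
    simp only [coeff_add, coeff_single, Finsupp.add_apply, Finsupp.single_apply]
    rcases i with _ | i
    · rcases k with _ | k <;> simp
    · by_cases h : i = k
      · subst h; simp
      · by_cases h' : i + 1 = k
        · subst h'; simp
        · simp [h, h']

theorem isUnit_scal_aux {R : Type*} [CommRing R] [Algebra ℚ R] (c : Rˣ) (k : ℕ) :
    IsUnit ((c : R) * ((k + 1 : ℕ) : R)) := by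
  refine c.isUnit.mul ?_
  rw [← map_natCast (algebraMap ℚ R)]
  exact (IsUnit.mk0 _ (by positivity)).map _

theorem ker_aux {R : Type*} [CommRing R] [Algebra ℚ R]
    {M : Type*} [AddCommGroup M] [Module R M]
    (c : Rˣ) (N : M →ₗ[R] M) (n : ℕ) (hn : N ^ n = 0)
    (D : PolynomialModule R M →ₗ[R] PolynomialModule R M)
    (hD : ∀ (k : ℕ) (m : M),
      D (PolynomialModule.single R k m)
        = PolynomialModule.single R k (N m)
          + ((c : R) * (k : R)) • PolynomialModule.single R (k - 1) m)
    (x : PolynomialModule R M) : D x = 0 ↔ ∃ m : M, stmtEps R c N n m = x := by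
  have hE : ∀ m, D (stmtEps R c N n m) = 0 := by
    intro m
    ext k
    rw [D_coeff_aux c N D hD, eps_coeff_aux c N n hn, eps_coeff_aux c N n hn, smul_smul,
      scal_aux, map_smul, pow_succ', Module.End.mul_apply]
    simp
  constructor
  · intro h
    refine ⟨x.coeff 0, ?_⟩
    have key : ∀ k, (stmtEps R c N n (x.coeff 0)).coeff k = x.coeff k := by
      intro k
      induction k with
      | zero => rw [eps_coeff_aux c N n hn]; simp
      | succ k ih =>
        have h1 := D_coeff_aux c N D hD x k
        have h2 := D_coeff_aux c N D hD (stmtEps R c N n (x.coeff 0)) k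
        rw [h] at h1
        rw [hE, ih, h1] at h2
        exact ((isUnit_scal_aux c k).smul_left_cancel.mp (add_left_cancel h2)).symm
    ext k
    exact key k
  · rintro ⟨m, rfl⟩
    exact hE m

theorem bij_aux {R : Type*} [CommRing R] [Algebra ℚ R]
    {M : Type*} [AddCommGroup M] [Module R M]
    (c : Rˣ) (N : M →ₗ[R] M) (n : ℕ) (hn : N ^ n = 0)
    (Φ : PolynomialModule R M →ₗ[Polynomial R] PolynomialModule R M)
    (hΦ : ∀ m : M, Φ (PolynomialModule.single R 0 m) = stmtEps R c N n m) :
    Function.Bijective Φ := by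
  let NX : Module.End (Polynomial R) (PolynomialModule R M) :=
    { toFun := PolynomialModule.map R N
      map_add' := map_add _
      map_smul' := fun p q => by simpa using PolynomialModule.map_smul R N p q }
  have hs : ∀ k i m, (NX ^ k) (PolynomialModule.single R i m)
      = PolynomialModule.single R i ((N ^ k) m) := by
    intro k i
    induction k with
    | zero => intro m; simp
    | succ k ih =>
      intro m
      rw [pow_succ, pow_succ, Module.End.mul_apply, Module.End.mul_apply, ← ih]
      congr 1
      exact PolynomialModule.map_single R N i m
  have hnX : NX ^ n = 0 := by
    ext1 x
    induction x using PolynomialModule.induction_linear with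
    | zero => simp
    | add p q hp hq => rw [map_add, hp, hq]; simp
    | single i m => rw [hs, hn]; simp
  have hsum : Φ = ∑ k ∈ Finset.range n, (Polynomial.monomial k
      (algebraMap ℚ R ((-1) ^ k / (Nat.factorial k)) * ((c⁻¹ : Rˣ) : R) ^ k)) • NX ^ k := by
    ext1 x
    induction x using PolynomialModule.induction_linear with
    | zero => simp
    | add p q hp hq => rw [map_add, map_add, hp, hq]
    | single i m =>
      have : PolynomialModule.single R i m
          = Polynomial.monomial i (1 : R) • PolynomialModule.single R 0 m := by
        simp
      rw [this, map_smul, map_smul, hΦ, LinearMap.sum_apply]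
      congr 1
      unfold stmtEps
      refine Finset.sum_congr rfl fun k _ => ?_
      rw [LinearMap.smul_apply, hs, PolynomialModule.monomial_smul_single, add_zero]
  refine (Module.End.isUnit_iff Φ).mp ?_
  rcases n with _ | n
  · have : (1 : Module.End (Polynomial R) (PolynomialModule R M)) = 0 := by simpa using hnX
    have h2 : Φ = 1 := by rw [hsum, this]; simp
    rw [h2]; exact isUnit_one
  · rw [hsum, Finset.sum_range_succ']
    have h0 : (Polynomial.monomial 0
      (algebraMap ℚ R ((-1) ^ 0 / (Nat.factorial 0)) * ((c⁻¹ : Rˣ) : R) ^ 0)) • NX ^ 0 = 1 := by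
      simp
    rw [h0]
    refine IsNilpotent.isUnit_add_one ?_
    refine Commute.isNilpotent_sum (fun k _ => ?_) (fun i j _ _ => ?_)
    · exact IsNilpotent.smul (IsNilpotent.pow_of_pos ⟨_, hnX⟩ (Nat.succ_ne_zero k)) _
    · exact ((Commute.pow_pow_self NX _ _).smul_left _).smul_right _

/-- Let `R` be a commutative `ℚ`-algebra, `c ∈ R` a unit, `M` an `R`-module and
`N : M → M` a nilpotent `R`-linear endomorphism (`Nⁿ = 0`).  Let `M[Y]` be the module of
polynomials with coefficients in `M` and `D` the `R`-linear map determined by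
`D(Yᵏ ⊗ m) = Yᵏ ⊗ N(m) + c·k·Y^{k−1} ⊗ m`.  Then `ε : m ↦ Σ_k ((−1/c)ᵏ/k!)·Yᵏ ⊗ Nᵏ(m)` is
injective with image exactly `ker D`; in particular `ker D ≅ M`, so if `M` is free of rank `d`
then so is `ker D`.  Moreover the `R[Y]`-linear endomorphism of `M[Y]` determined by
`1 ⊗ m ↦ ε(m)` is bijective. -/
theorem stmt9 (R : Type*) [CommRing R] [Algebra ℚ R]
    (M : Type*) [AddCommGroup M] [Module R M]
    (c : Rˣ) (N : M →ₗ[R] M) (n : ℕ) (hn : N ^ n = 0)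
    (D : PolynomialModule R M →ₗ[R] PolynomialModule R M)
    (hD : ∀ (k : ℕ) (m : M),
      D (PolynomialModule.single R k m)
        = PolynomialModule.single R k (N m)
          + ((c : R) * (k : R)) • PolynomialModule.single R (k - 1) m) :
    Function.Injective (stmtEps R c N n) ∧
    (∀ x : PolynomialModule R M, D x = 0 ↔ ∃ m : M, stmtEps R c N n m = x) ∧
    Nonempty ((LinearMap.ker D) ≃ₗ[R] M) ∧
    (Module.Free R M → ∀ d : ℕ, Module.rank R M = d →
      Module.Free R (LinearMap.ker D) ∧ Module.rank R (LinearMap.ker D) = d) ∧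
    (∀ Φ : PolynomialModule R M →ₗ[Polynomial R] PolynomialModule R M,
      (∀ m : M, Φ (PolynomialModule.single R 0 m) = stmtEps R c N n m) →
      Function.Bijective Φ) := by
  have hinj : Function.Injective (stmtEps R c N n) := by
    intro a b h
    have := congrArg (fun x => PolynomialModule.coeff x 0) h
    simpa [eps_coeff_aux c N n hn] using this
  have hker := ker_aux c N n hn D hD
  let E : M →ₗ[R] PolynomialModule R M :=
    { toFun := stmtEps R c N n
      map_add' := fun a b => by
        ext k
        simp [eps_coeff_aux c N n hn]
      map_smul' := fun r a => by
        simp only [stmtEps, map_smul, RingHom.id_apply, Finset.smul_sum]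
        refine Finset.sum_congr rfl fun k _ => ?_
        rw [smul_comm, PolynomialModule.single_smul] }
  have hr : LinearMap.range E = LinearMap.ker D := by
    ext x
    rw [LinearMap.mem_ker, hker]
    rfl
  let e : M ≃ₗ[R] LinearMap.ker D :=
    (LinearEquiv.ofInjective E hinj).trans (LinearEquiv.ofEq _ _ hr)
  refine ⟨hinj, hker, ⟨e.symm⟩, ?_, bij_aux c N n hn⟩
  intro hf d hd
  exact ⟨Module.Free.of_equiv e, by rw [← e.rank_eq, hd]⟩
end

section
/- Let R be a commutative ℚ-algebra, M and M' R-modules, and f : M → M, g : M' → M' nilpotent R-linear endomorphisms. For a nilpotent R-linear endomorphism u of an R-module, define log(1 + u) := Σ_{n≥1} (−1)^{n−1}·uⁿ/n (a finite sum). Then the endomorphism (1+f) ⊗ (1+g) − id of M ⊗_R M' is nilpotent, and log((1+f) ⊗ (1+g)) = log(1+f) ⊗ id_{M'} + id_M ⊗ log(1+g) as R-linear endomorphisms of M ⊗_R M'. -/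
open TensorProduct

/-- Truncated logarithm in an arbitrary `R`-algebra. -/
noncomputable def tlog (R : Type*) [CommRing R] [Algebra ℚ R] {A : Type*} [Ring A] [Algebra R A]
    (N : ℕ) (u : A) : A :=
  ∑ k ∈ Finset.Icc 1 N, algebraMap ℚ R ((-1) ^ (k - 1) / k) • u ^ k

lemma tlog_map (R : Type*) [CommRing R] [Algebra ℚ R] {A B : Type*} [Ring A] [Algebra R A]
    [Ring B] [Algebra R B] (φ : A →ₐ[R] B) (N : ℕ) (u : A) :
    φ (tlog R N u) = tlog R N (φ u) := by
  simp [tlog, map_sum]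

open Polynomial in
lemma tlog_deriv (R : Type*) [CommRing R] [Algebra ℚ R] {A : Type*} [CommRing A] [Algebra R A]
    (N : ℕ) (u : A[X]) (hu : u ^ N = 0) :
    (1 + u) * derivative (tlog R N u) = derivative u := by
  have h1 : derivative (tlog R N u) = (∑ k ∈ Finset.range N, (-u) ^ k) * derivative u := by
    unfold tlog
    rw [derivative_sum, Finset.sum_mul, Finset.range_eq_Ico,
      Finset.sum_Ico_eq_sum_range, ← Finset.Ico_add_one_right_eq_Icc, Finset.sum_Ico_eq_sum_range]
    refine Finset.sum_congr (by simp) fun k _ => ?_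
    rw [derivative_smul, derivative_pow]
    have hk : ((1 + k : ℕ) : ℚ) ≠ 0 := by positivity
    have h2 : algebraMap ℚ R ((-1) ^ (1 + k - 1) / (1 + k : ℕ)) * ((1 + k : ℕ) : R)
        = (-1) ^ k := by
      rw [← map_natCast (algebraMap ℚ R) (1 + k), ← map_mul, div_mul_cancel₀ _ hk]
      simp
    have h3 : (C ((1 + k : ℕ) : A) : A[X]) = algebraMap R A[X] ((1 + k : ℕ) : R) := by
      simp
    rw [h3, Algebra.smul_def, ← mul_assoc, ← mul_assoc, ← map_mul, h2]
    rw [neg_pow u]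
    simp
  rw [h1, ← mul_assoc]
  have h4 := mul_neg_geom_sum (-u) N
  rw [neg_pow u N, hu, sub_neg_eq_add, mul_zero, sub_zero] at h4
  rw [h4, one_mul]

open Polynomial in
lemma tlog_comm (R : Type*) [CommRing R] [Algebra ℚ R] {A : Type*} [CommRing A] [Algebra R A]
    (a b : ℕ) (x y : A) (hx : x ^ a = 0) (hy : y ^ b = 0) :
    (x + y + x * y) ^ (a + b) = 0 ∧
    tlog R (a + b) (x + y + x * y) = tlog R (a + b) x + tlog R (a + b) y := by
  have key : ∀ {B : Type _} [CommRing B] (x y : B), x ^ a = 0 → y ^ b = 0 →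
      (x + y + x * y) ^ (a + b) = 0 := by
    intro B _ x y hx hy
    have : x + y + x * y = x * (1 + y) + y := by ring
    rw [this]
    refine (Commute.all _ _).add_pow_eq_zero_of_add_le_succ_of_pow_eq_zero
      (m := a) (n := b) ?_ hy (by omega)
    rw [mul_pow, hx, zero_mul]
  refine ⟨key x y hx hy, ?_⟩
  letI : Algebra ℚ A := ((algebraMap R A).comp (algebraMap ℚ R)).toAlgebra
  have hX : (X * C x : A[X]) ^ a = 0 := by rw [mul_pow, ← C_pow, hx]; simp
  have hY : (C y : A[X]) ^ b = 0 := by rw [← C_pow, hy]; simp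
  set p : A[X] := X * C x with hp
  set q : A[X] := C y with hq
  set P : A[X] := tlog R (a + b) (p + q + p * q) - tlog R (a + b) p - tlog R (a + b) q with hP
  have d1 := tlog_deriv R (a + b) (p + q + p * q) (key p q hX hY)
  have d2 := tlog_deriv R (a + b) p (by rw [pow_add, hX, zero_mul])
  have d3 := tlog_deriv R (a + b) q (by rw [pow_add, hY, mul_zero])
  have dq : derivative q = 0 := by simp [hq]
  have up : IsUnit (1 + p) := IsNilpotent.isUnit_one_add ⟨a, hX⟩
  have uq : IsUnit (1 + q) := IsNilpotent.isUnit_one_add ⟨b, hY⟩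
  have dP : derivative P = 0 := by
    refine (up.mul uq).mul_right_eq_zero.mp ?_
    rw [hP, derivative_sub, derivative_sub]
    simp only [derivative_add, derivative_mul, dq] at d1 d3
    linear_combination d1 - (1 + q) * d2 - (1 + p) * d3
  have hP0 : P.eval 0 = 0 := by
    have e : ∀ u : A[X], (tlog R (a + b) u).eval 0 = tlog R (a + b) (u.eval 0) := fun u => by
      simp [tlog, eval_finset_sum]
    simp [hP, e, hp, hq]
    simp [tlog]
    refine Finset.sum_eq_zero fun k hk => ?_
    rw [zero_pow (by have := (Finset.mem_Icc.mp hk).1; omega), smul_zero]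
  have hPz : P = 0 := by
    ext n
    cases n with
    | zero => rw [coeff_zero_eq_eval_zero, hP0]; simp
    | succ n =>
      have := congrArg (fun r => coeff r n) dP
      simp only [coeff_derivative, coeff_zero] at this ⊢
      have hu : IsUnit ((n : A) + 1) := by
        have : ((n : A) + 1) = algebraMap ℚ A (n + 1) := by simp
        rw [this]
        exact (IsUnit.mk0 _ (by positivity)).map _
      exact hu.mul_left_eq_zero.mp this
  have e1 : ∀ u : A[X], (tlog R (a + b) u).eval 1 = tlog R (a + b) (u.eval 1) := fun u => by
    simp [tlog, eval_finset_sum]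
  have := congrArg (eval 1) hPz
  rw [hP] at this
  simp only [eval_sub, e1] at this
  simp [hp, hq] at this
  rw [sub_sub, sub_eq_zero] at this
  exact this



/-- The truncated logarithm `log(1 + u) = Σ_{k=1}^{N} (−1)^{k−1} uᵏ / k` of a nilpotent
endomorphism `u` (a finite sum, independent of `N` once `N` exceeds the nilpotency index). -/
noncomputable def nilLog (R : Type*) [CommRing R] [Algebra ℚ R] {M : Type*}
    [AddCommGroup M] [Module R M] (N : ℕ) (u : M →ₗ[R] M) : M →ₗ[R] M :=
  ∑ k ∈ Finset.Icc 1 N, algebraMap ℚ R ((-1) ^ (k - 1) / k) • u ^ k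

/-- Let `R` be a commutative `ℚ`-algebra, `M`, `M'` `R`-modules, and
`f : M → M`, `g : M' → M'` nilpotent `R`-linear endomorphisms.  Then
`(1+f) ⊗ (1+g) − id` is a nilpotent endomorphism of `M ⊗_R M'`, and
`log((1+f) ⊗ (1+g)) = log(1+f) ⊗ id + id ⊗ log(1+g)`. -/
theorem stmt12 (R : Type*) [CommRing R] [Algebra ℚ R]
    (M M' : Type*) [AddCommGroup M] [AddCommGroup M'] [Module R M] [Module R M']
    (f : M →ₗ[R] M) (g : M' →ₗ[R] M') (a b : ℕ) (hf : f ^ a = 0) (hg : g ^ b = 0) :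
    IsNilpotent (TensorProduct.map (LinearMap.id + f) (LinearMap.id + g) - LinearMap.id) ∧
    nilLog R (a + b)
        (TensorProduct.map (LinearMap.id + f) (LinearMap.id + g) - LinearMap.id)
      = TensorProduct.map (nilLog R (a + b) f) LinearMap.id
        + TensorProduct.map LinearMap.id (nilLog R (a + b) g) := by

  set F : Module.End R (M ⊗[R] M') := TensorProduct.map f LinearMap.id with hF
  set G : Module.End R (M ⊗[R] M') := TensorProduct.map LinearMap.id g with hG
  have hFp : ∀ k, F ^ k = TensorProduct.map (f ^ k) LinearMap.id := fun k => by
    rw [hF, TensorProduct.map_pow, ← Module.End.one_eq_id, one_pow]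
  have hGp : ∀ k, G ^ k = TensorProduct.map LinearMap.id (g ^ k) := fun k => by
    rw [hG, TensorProduct.map_pow, ← Module.End.one_eq_id, one_pow]
  have hFG : F * G = TensorProduct.map f g := by
    rw [hF, hG, ← TensorProduct.map_mul]; rfl
  have hGF : G * F = TensorProduct.map f g := by
    rw [hF, hG, ← TensorProduct.map_mul]; rfl
  have hH : TensorProduct.map (LinearMap.id + f) (LinearMap.id + g) - LinearMap.id
      = F + G + F * G := by
    rw [hFG, hF, hG]
    simp only [TensorProduct.map_add_left, TensorProduct.map_add_right, TensorProduct.map_id]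
    abel
  have hLF : TensorProduct.map (nilLog R (a + b) f) LinearMap.id = tlog R (a + b) F := by
    simp only [nilLog, tlog, hFp]
    rw [← LinearMap.rTensor_def]
    simp only [← LinearMap.coe_rTensorHom, map_sum, map_smul]
    rfl
  have hLG : TensorProduct.map LinearMap.id (nilLog R (a + b) g) = tlog R (a + b) G := by
    simp only [nilLog, tlog, hGp]
    rw [← LinearMap.lTensor_def]
    simp only [← LinearMap.coe_lTensorHom, map_sum, map_smul]
    rfl
  have hcomm : ∀ u ∈ ({F, G} : Set (Module.End R (M ⊗[R] M'))), ∀ v ∈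
      ({F, G} : Set (Module.End R (M ⊗[R] M'))), u * v = v * u := by
    rintro u (rfl | rfl) v (rfl | rfl) <;> simp only [hFG, hGF]
  letI := Algebra.adjoinCommRingOfComm R hcomm
  let S := Algebra.adjoin R ({F, G} : Set (Module.End R (M ⊗[R] M')))
  let x : S := ⟨F, Algebra.subset_adjoin (by simp)⟩
  let y : S := ⟨G, Algebra.subset_adjoin (by simp)⟩
  have hx : x ^ a = 0 := Subtype.ext (by
    change F ^ a = 0
    rw [hFp, hf, TensorProduct.map_zero_left])
  have hy : y ^ b = 0 := Subtype.ext (by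
    change G ^ b = 0
    rw [hGp, hg, TensorProduct.map_zero_right])
  obtain ⟨h1, h2⟩ := tlog_comm R a b x y hx hy
  rw [hH, hLF, hLG]
  refine ⟨⟨a + b, congrArg S.val h1⟩, ?_⟩
  have h3 := congrArg S.val h2
  rw [map_add, tlog_map, tlog_map, tlog_map] at h3
  exact h3
end

section
/- Let C be a field, G a group, H a normal subgroup of G, and V a simple (irreducible) module over the group algebra C[G]. Suppose W ⊆ V is a C[H]-submodule that is simple as a C[H]-module, and suppose that for every g ∈ G with g ∉ H, the C[H]-submodule g·W of V is not isomorphic to W as a C[H]-module. Then the natural C[G]-linear map C[G] ⊗_{C[H]} W → V, x ⊗ w ↦ x·w, is an isomorphism. -/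
open TensorProduct

/-- The submodule of relations defining the induced module
`C[G] ⊗_{C[H]} W = (C[G] ⊗_C W) / ⟨(x·h) ⊗ w − x ⊗ (h·w)⟩`, where `W` is an `H`-stable
`C`-subspace of a `G`-representation `(V, ρ)`. -/
noncomputable def clifRel (C : Type*) [Field C] (G : Type*) [Group G] (H : Subgroup G)
    (V : Type*) [AddCommGroup V] [Module C V] (ρ : Representation C G V)
    (W : Submodule C V) (hstab : ∀ h ∈ H, ∀ v ∈ W, ρ h v ∈ W) :
    Submodule (MonoidAlgebra C G) (MonoidAlgebra C G ⊗[C] ↥W) :=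
  Submodule.span (MonoidAlgebra C G)
    {t | ∃ (x : MonoidAlgebra C G) (h : G) (hh : h ∈ H) (v : V) (hv : v ∈ W),
      t = (x * MonoidAlgebra.of C G h) ⊗ₜ[C] (⟨v, hv⟩ : W)
            - x ⊗ₜ[C] (⟨ρ h v, hstab h hh v hv⟩ : W)}

/-- The translate `g·W` as a subrepresentation of the restriction of `ρ` to `H`. -/
def transSub {C : Type*} [Field C] {G : Type*} [Group G]
    (H : Subgroup G) (hH : H.Normal)
    {V : Type*} [AddCommGroup V] [Module C V]
    (ρ : Representation C G V) (W : Submodule C V)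
    (hstab : ∀ h ∈ H, ∀ v ∈ W, ρ h v ∈ W) (g : G) :
    Subrepresentation (MonoidHom.comp ρ H.subtype : Representation C H V) where
  toSubmodule := Submodule.map (ρ g) W
  apply_mem_toSubmodule := by
    rintro ⟨h, hh⟩ v ⟨w, hw, rfl⟩
    refine ⟨ρ (g⁻¹ * h * g) w, hstab _ (by simpa using hH.conj_mem h hh g⁻¹) w hw, ?_⟩
    simp [mul_assoc, ← Module.End.mul_apply, ← map_mul]

theorem transSub_simple {C : Type*} [Field C] {G : Type*} [Group G]
    (H : Subgroup G) (hH : H.Normal)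
    {V : Type*} [AddCommGroup V] [Module C V]
    (ρ : Representation C G V) (W : Submodule C V)
    (hstab : ∀ h ∈ H, ∀ v ∈ W, ρ h v ∈ W)
    (hWnontriv : Nontrivial W)
    (hWsimple : ∀ U : Submodule C V, U ≤ W → (∀ h ∈ H, ∀ v ∈ U, ρ h v ∈ U) →
      U = ⊥ ∨ U = W) (g : G) :
    IsSimpleModule (MonoidAlgebra C H) (transSub H hH ρ W hstab g).asSubmodule := by
  rw [isSimpleModule_iff_isAtom]
  have key : IsAtom (transSub H hH ρ W hstab g) := by
    constructor
    · intro h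
      obtain ⟨⟨w, hw⟩, hw0⟩ := exists_ne (0 : W)
      have h1 : ρ g w ∈ (transSub H hH ρ W hstab g).toSubmodule := ⟨w, hw, rfl⟩
      rw [h] at h1
      have h2 : ρ g w = 0 := h1
      have h3 : ρ g⁻¹ (ρ g w) = 0 := by rw [h2, map_zero]
      rw [← Module.End.mul_apply, ← map_mul] at h3
      simp at h3
      exact hw0 (Subtype.ext h3)
    · intro U hU
      have hle : U.toSubmodule ≤ Submodule.map (ρ g) W := hU.le
      have key2 : U.toSubmodule.comap (ρ g) = ⊥ ∨ U.toSubmodule.comap (ρ g) = W := by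
        refine hWsimple (U.toSubmodule.comap (ρ g)) ?_ ?_
        · intro v hv
          obtain ⟨w, hw, hwv⟩ := hle hv
          have h3 : ρ g⁻¹ (ρ g w) = ρ g⁻¹ (ρ g v) := by rw [hwv]
          simp only [← Module.End.mul_apply, ← map_mul] at h3
          simp at h3
          exact h3 ▸ hw
        · intro h hh v hv
          have := U.apply_mem_toSubmodule ⟨g * h * g⁻¹, hH.conj_mem h hh g⟩ hv
          simpa [← Module.End.mul_apply, ← map_mul] using this
      rcases key2 with h | h
      · apply Subrepresentation.toSubmodule_injective
        change U.toSubmodule = ⊥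
        rw [eq_bot_iff]
        intro v hv
        obtain ⟨w, hw, rfl⟩ := hle hv
        have : w ∈ U.toSubmodule.comap (ρ g) := hv
        rw [h] at this
        have h0 : w = 0 := this
        simp [h0]
      · exfalso
        apply hU.not_ge
        rintro _ ⟨w, hw, rfl⟩
        have : w ∈ U.toSubmodule.comap (ρ g) := h ▸ hw
        exact this
  exact (OrderIso.isAtom_iff
    (Subrepresentation.subrepresentationSubmoduleOrderIso) _).2 key

theorem trans_indep {C : Type*} [Field C] {G : Type*} [Group G]
    (H : Subgroup G) (hH : H.Normal)
    {V : Type*} [AddCommGroup V] [Module C V]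
    (ρ : Representation C G V) (W : Submodule C V)
    (hstab : ∀ h ∈ H, ∀ v ∈ W, ρ h v ∈ W)
    (hWnontriv : Nontrivial W)
    (hWsimple : ∀ U : Submodule C V, U ≤ W → (∀ h ∈ H, ∀ v ∈ U, ρ h v ∈ U) →
      U = ⊥ ∨ U = W)
    (hnoniso : ∀ g : G, g ∉ H →
      ¬ ∃ e : ↥W →ₗ[C] V, Function.Injective e ∧
          LinearMap.range e = Submodule.map (ρ g) W ∧
          ∀ (h : G) (hh : h ∈ H) (v : V) (hv : v ∈ W),
            e ⟨ρ h v, hstab h hh v hv⟩ = ρ h (e ⟨v, hv⟩)) :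
    iSupIndep (fun q : G ⧸ H => (transSub H hH ρ W hstab q.out).asSubmodule) := by
  have hs := transSub_simple H hH ρ W hstab hWnontriv hWsimple
  have ind := sSupIndep_isotypicComponents (MonoidAlgebra C H)
    (Representation.asModule (MonoidHom.comp ρ H.subtype : Representation C H V))
  rw [sSupIndep_iff] at ind
  let F : G ⧸ H → isotypicComponents (MonoidAlgebra C H)
    (Representation.asModule (MonoidHom.comp ρ H.subtype : Representation C H V)) := fun q =>
    ⟨isotypicComponent _ _ (transSub H hH ρ W hstab q.out).asSubmodule, _, hs _, rfl⟩
  have hF : Function.Injective F := by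
    intro a b hab
    by_contra hne
    have hab2 := congrArg Subtype.val hab
    have hle := (transSub H hH ρ W hstab a.out).asSubmodule.le_isotypicComponent.trans_eq hab2
    have := hs a.out
    have := hs b.out
    obtain ⟨E⟩ := isIsotypicOfType_submodule_iff.mp (.isotypicComponent _ _ _) _ hle
    have hcoset : (a.out)⁻¹ * b.out ∉ H := by
      rw [← QuotientGroup.eq]
      simpa using hne
    apply hnoniso _ hcoset
    have hE : ∀ (h : H) (x y : (transSub H hH ρ W hstab a.out).asSubmodule),
        (y.1 : V) = ρ h x.1 → ((E y).1 : V) = ρ h (E x).1 := by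
      intro h x y hxy
      have : y = MonoidAlgebra.of C H h • x := by
        apply Subtype.ext
        change y.1 = MonoidAlgebra.of C H h • x.1
        rw [MonoidAlgebra.of_apply, Representation.single_smul, one_smul]
        exact hxy
      rw [this, map_smul]
      change MonoidAlgebra.of C H h • (E x).1 = _
      rw [MonoidAlgebra.of_apply, Representation.single_smul, one_smul]
      rfl
    have hEs : ∀ (c : C) (x y : (transSub H hH ρ W hstab a.out).asSubmodule),
        (y.1 : V) = c • (show V from x.1) → ((E y).1 : V) = c • (show V from (E x).1) := by
      intro h x y hxy
      have : y = MonoidAlgebra.single (1 : H) h • x := by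
        apply Subtype.ext
        change y.1 = MonoidAlgebra.single (1 : H) h • x.1
        rw [Representation.single_smul, map_one]
        exact hxy
      rw [this, map_smul]
      change MonoidAlgebra.single (1 : H) h • (E x).1 = _
      rw [Representation.single_smul, map_one]
      rfl
    let i : W → (transSub H hH ρ W hstab a.out).asSubmodule :=
      fun w => ⟨ρ a.out w.1, w.1, w.2, rfl⟩
    let e0 : W →ₗ[C] V :=
      { toFun := fun w => (E (i w)).1
        map_add' := by
          intro x y
          have : i (x + y) = i x + i y := Subtype.ext (map_add (ρ a.out) x.1 y.1)
          rw [this, map_add]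
          rfl
        map_smul' := by
          intro c x
          exact hEs c _ _ (map_smul (ρ a.out) c x.1) }
    have hinv : ∀ (g : G) (v : V), ρ g⁻¹ (ρ g v) = v := by simp
    have hinv2 : ∀ (g : G) (v : V), ρ g (ρ g⁻¹ v) = v := by simp
    refine ⟨(ρ (a.out)⁻¹).comp e0, ?_, ?_, ?_⟩
    · intro x y hxy
      have h1 : e0 x = e0 y := by
        have := congrArg (ρ a.out) hxy
        simpa [hinv2] using this
      have h2 : i x = i y := E.injective (Subtype.ext h1)
      have h3 : ρ a.out x.1 = ρ a.out y.1 := congrArg Subtype.val h2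
      have h4 := congrArg (ρ (a.out)⁻¹) h3
      rw [hinv, hinv] at h4
      exact Subtype.ext h4
    · ext v
      constructor
      · rintro ⟨w, rfl⟩
        obtain ⟨w2, hw2, hw3⟩ := (E (i w)).2
        refine ⟨w2, hw2, ?_⟩
        rw [map_mul]
        exact congrArg (ρ (a.out)⁻¹) hw3
      · rintro ⟨w, hw, rfl⟩
        obtain ⟨⟨_, ⟨w2, hw2, rfl⟩⟩, hx⟩ := E.surjective ⟨ρ b.out w, w, hw, rfl⟩
        refine ⟨⟨w2, hw2⟩, ?_⟩
        rw [map_mul]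
        exact congrArg (ρ (a.out)⁻¹) (congrArg Subtype.val hx)
    · intro h hh v hv
      have := hE ⟨a.out * h * (a.out)⁻¹, hH.conj_mem h hh _⟩ (i ⟨v, hv⟩)
        (i ⟨ρ h v, hstab h hh v hv⟩) (by
          change ρ a.out (ρ h v) = ρ (a.out * h * (a.out)⁻¹) (ρ a.out v)
          simp [map_mul])
      change ρ (a.out)⁻¹ (E (i ⟨ρ h v, hstab h hh v hv⟩)).1 = ρ h (ρ (a.out)⁻¹ (E (i ⟨v, hv⟩)).1)
      refine (congrArg (ρ (a.out)⁻¹) this).trans ?_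
      have hgen : ∀ (g : G) (u : V), ρ g⁻¹ (ρ (g * h * g⁻¹) u) = ρ h (ρ g⁻¹ u) := by
        intro g u
        simp [map_mul]
      exact hgen _ _
  exact (ind.comp hF).mono fun q => Submodule.le_isotypicComponent _

/-- **Clifford theory.** Let `C` be a field, `G` a group, `H ⊴ G`, and `V` a
simple `C[G]`-module.  Suppose `W ⊆ V` is a `C[H]`-submodule that is simple over `C[H]`, and
that for every `g ∉ H` the translate `g·W` is not isomorphic to `W` as a `C[H]`-module.  Then
the natural `C[G]`-linear map `C[G] ⊗_{C[H]} W → V`, `x ⊗ w ↦ x·w`, is an isomorphism. -/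
theorem stmt14 (C : Type*) [Field C] (G : Type*) [Group G]
    (H : Subgroup G) (hH : H.Normal)
    (V : Type*) [AddCommGroup V] [Module C V]
    (ρ : Representation C G V)
    (hsimple : IsSimpleModule (MonoidAlgebra C G) ρ.asModule)
    (W : Submodule C V)
    (hstab : ∀ h ∈ H, ∀ v ∈ W, ρ h v ∈ W)
    (hWnontriv : Nontrivial W)
    (hWsimple : ∀ U : Submodule C V, U ≤ W → (∀ h ∈ H, ∀ v ∈ U, ρ h v ∈ U) →
      U = ⊥ ∨ U = W)
    (hnoniso : ∀ g : G, g ∉ H →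
      ¬ ∃ e : ↥W →ₗ[C] V, Function.Injective e ∧
          LinearMap.range e = Submodule.map (ρ g) W ∧
          ∀ (h : G) (hh : h ∈ H) (v : V) (hv : v ∈ W),
            e ⟨ρ h v, hstab h hh v hv⟩ = ρ h (e ⟨v, hv⟩)) :
    ∃ φ : ((MonoidAlgebra C G ⊗[C] ↥W) ⧸ clifRel C G H V ρ W hstab)
        →ₗ[MonoidAlgebra C G] ρ.asModule,
      (∀ (x : MonoidAlgebra C G) (v : V) (hv : v ∈ W),
        φ (Submodule.Quotient.mk (x ⊗ₜ[C] (⟨v, hv⟩ : W)))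
          = x • (ρ.asModuleEquiv.symm v)) ∧
      Function.Bijective φ := by
  classical
  have : SMulCommClass (MonoidAlgebra C G) C ρ.asModule :=
    IsScalarTower.to_smulCommClass'
  let f0 : W →ₗ[C] ρ.asModule := ρ.asModuleEquiv.symm.toLinearMap.comp W.subtype
  let φ0 : MonoidAlgebra C G ⊗[C] ↥W →ₗ[MonoidAlgebra C G] ρ.asModule :=
    TensorProduct.AlgebraTensorModule.lift
      (LinearMap.toSpanSingleton (MonoidAlgebra C G) (W →ₗ[C] ρ.asModule) f0)
  have hφ0 : ∀ (x : MonoidAlgebra C G) (w : W),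
      φ0 (x ⊗ₜ w) = x • ρ.asModuleEquiv.symm w.1 := fun x w => rfl
  have hker : clifRel C G H V ρ W hstab ≤ LinearMap.ker φ0 := by
    refine Submodule.span_le.2 ?_
    rintro _ ⟨x, h, hh, v, hv, rfl⟩
    rw [SetLike.mem_coe, LinearMap.mem_ker, map_sub, hφ0, hφ0,
      Representation.asModuleEquiv_symm_map_rho, mul_smul, sub_self]
  let φ := Submodule.liftQ _ φ0 hker
  have hφ : ∀ (x : MonoidAlgebra C G) (v : V) (hv : v ∈ W),
        φ (Submodule.Quotient.mk (x ⊗ₜ[C] (⟨v, hv⟩ : W)))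
          = x • (ρ.asModuleEquiv.symm v) := fun x v hv => rfl
  refine ⟨φ, hφ, ?_, ?_⟩
  · -- injectivity
    let r : (G ⧸ H) → W → ((MonoidAlgebra C G ⊗[C] ↥W) ⧸ clifRel C G H V ρ W hstab) :=
      fun q w => Submodule.Quotient.mk (MonoidAlgebra.of C G q.out ⊗ₜ[C] w)
    have hr0 : ∀ q, r q 0 = 0 := by
      intro q
      simp [r]
    have hradd : ∀ q x y, r q (x + y) = r q x + r q y := by
      intro q x y
      simp [r, TensorProduct.tmul_add]
    have hsurj : ∀ t, ∃ f : (G ⧸ H) →₀ W, t = f.sum r := by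
      intro t
      obtain ⟨t, rfl⟩ := Submodule.Quotient.mk_surjective _ t
      have hadd : ∀ s t : ((MonoidAlgebra C G ⊗[C] ↥W) ⧸ clifRel C G H V ρ W hstab),
          (∃ f : (G ⧸ H) →₀ W, s = f.sum r) → (∃ f : (G ⧸ H) →₀ W, t = f.sum r) →
          (∃ f : (G ⧸ H) →₀ W, s + t = f.sum r) := by
        rintro _ _ ⟨f, rfl⟩ ⟨g, rfl⟩
        exact ⟨f + g, (Finsupp.sum_add_index' hr0 hradd).symm⟩
      induction t using TensorProduct.induction_on with
      | zero => exact ⟨0, by simp⟩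
      | add x y hx hy => exact hadd _ _ hx hy
      | tmul x w =>
        induction x using MonoidAlgebra.induction_linear with
        | zero => exact ⟨0, by simp⟩
        | add x y hx hy =>
          rw [TensorProduct.add_tmul]
          exact hadd _ _ hx hy
        | single g c =>
          let q : G ⧸ H := g
          have hh : q.out⁻¹ * g ∈ H := by
            rw [← QuotientGroup.eq]
            simp [q]
          refine ⟨Finsupp.single q ⟨ρ (q.out⁻¹ * g) (c • w.1), hstab _ hh _ (W.smul_mem c w.2)⟩, ?_⟩
          rw [Finsupp.sum_single_index (hr0 q)]
          change _ = Submodule.Quotient.mk _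
          rw [Submodule.Quotient.eq]
          refine Submodule.subset_span
            ⟨MonoidAlgebra.of C G q.out, q.out⁻¹ * g, hh, c • w.1, W.smul_mem c w.2, ?_⟩
          congr 1
          rw [← map_mul, mul_inv_cancel_left]
          change _ = _ ⊗ₜ[C] (c • w)
          rw [TensorProduct.tmul_smul, TensorProduct.smul_tmul']
          simp
    have ind := trans_indep H hH ρ W hstab hWnontriv hWsimple hnoniso
    rw [iSupIndep_iff_finsetSum_eq_zero_imp_eq_zero] at ind
    rw [injective_iff_map_eq_zero]
    intro t ht
    obtain ⟨f, rfl⟩ := hsurj t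
    have hφr : ∀ q w, φ (r q w) = ρ.asModuleEquiv.symm (ρ q.out w.1) := by
      intro q w
      rw [Representation.asModuleEquiv_symm_map_rho]
      rfl
    rw [Finsupp.sum, map_sum] at ht
    simp only [hφr] at ht
    have hz := ind f.support (fun q => ρ q.out (f q).1) (fun q _ => ⟨_, (f q).2, rfl⟩) ht
    refine Finset.sum_eq_zero fun q hq => ?_
    have h1 : ρ q.out (f q).1 = 0 := hz q hq
    have h2 : (f q).1 = 0 := by
      have := congrArg (ρ q.out⁻¹) h1
      simpa using this
    rw [show f q = 0 from Subtype.ext h2, hr0]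
  · -- surjectivity
    rw [← LinearMap.range_eq_top]
    refine (eq_bot_or_eq_top (LinearMap.range φ)).resolve_left fun hb => ?_
    obtain ⟨⟨w, hw⟩, hw0⟩ := exists_ne (0 : W)
    have h1 := hφ 1 w hw
    rw [LinearMap.range_eq_bot.1 hb, one_smul] at h1
    exact hw0 (Subtype.ext (ρ.asModuleEquiv.symm.map_eq_zero_iff.1 h1.symm))
end
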